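/- Let S be an ordered semigroup satisfying axioms O1–O6. Then F(S), partially ordered pointwise, is a complete lattice: every subset of F(S) has a least upper bound and a greatest lower bound in F(S). -/

import Mathlib

open scoped ENNReal

/-- `CC s t` : `s` is (sequentially) compactly contained in `t`, written `s ≪ t`. -/
def CC {S : Type*} [AddCommMonoid S] [PartialOrder S] (s t : S) : Prop :=
  ∀ u : ℕ → S, Monotone u → ∀ x : S, IsLUB (Set.range u) x → t ≤ x → ∃ n, s ≤ u n

/-- An ordered semigroup (positive, with translation invariant order) satisfying axioms O1-O5. -/
structure CuO5 (S : Type*) [AddCommMonoid S] [PartialOrder S] : Prop where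
  addRightMono : ∀ {s t : S}, s ≤ t → ∀ r : S, s + r ≤ t + r
  zeroLe : ∀ s : S, 0 ≤ s
  O1 : ∀ u : ℕ → S, Monotone u → ∃ x : S, IsLUB (Set.range u) x
  O2 : ∀ s : S, ∃ u : ℕ → S, (∀ n, CC (u n) (u (n + 1))) ∧ IsLUB (Set.range u) s
  O3 : ∀ {s₁ t₁ s₂ t₂ : S}, CC s₁ t₁ → CC s₂ t₂ → CC (s₁ + s₂) (t₁ + t₂)
  O4 : ∀ u v : ℕ → S, Monotone u → Monotone v → ∀ x y : S,
    IsLUB (Set.range u) x → IsLUB (Set.range v) y →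
    IsLUB (Set.range fun n => u n + v n) (x + y)
  O5 : ∀ {s' s t : S}, CC s' s → s ≤ t → ∃ r : S, s' + r ≤ t ∧ t ≤ s + r

/-- Axioms O1-O6. -/
structure CuO6 (S : Type*) [AddCommMonoid S] [PartialOrder S] extends CuO5 S : Prop where
  O6 : ∀ {s r t : S}, s ≤ r + t → ∀ {s' : S}, CC s' s →
    ∃ r' t' : S, s' ≤ r' + t' ∧ r' ≤ r ∧ r' ≤ s ∧ t' ≤ t ∧ t' ≤ s

/-- A functional on `S`: additive, order preserving, zero preserving map to `[0,∞]`
preserving suprema of increasing sequences. -/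
structure IsFunctional {S : Type*} [AddCommMonoid S] [PartialOrder S] (l : S → ℝ≥0∞) : Prop where
  map_zero : l 0 = 0
  map_add : ∀ s t : S, l (s + t) = l s + l t
  mono : ∀ {s t : S}, s ≤ t → l s ≤ l t
  map_sup : ∀ u : ℕ → S, Monotone u → ∀ x : S, IsLUB (Set.range u) x → l x = ⨆ n, l (u n)

/-- Real multiplication on `S` : a map `(0,∞] × S → S` additive, order preserving and
sup-(of increasing sequences)-preserving in each variable, with `1 · s = s`.
Scalars are elements of `ℝ≥0∞` required to be positive. -/
structure RealMul (S : Type*) [AddCommMonoid S] [PartialOrder S] where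
  smul : ℝ≥0∞ → S → S
  add_left : ∀ {a b : ℝ≥0∞}, 0 < a → 0 < b → ∀ s : S, smul (a + b) s = smul a s + smul b s
  add_right : ∀ {a : ℝ≥0∞}, 0 < a → ∀ s t : S, smul a (s + t) = smul a s + smul a t
  mono_left : ∀ {a b : ℝ≥0∞}, 0 < a → a ≤ b → ∀ s : S, smul a s ≤ smul b s
  mono_right : ∀ {a : ℝ≥0∞}, 0 < a → ∀ {s t : S}, s ≤ t → smul a s ≤ smul a t
  sup_left : ∀ u : ℕ → ℝ≥0∞, Monotone u → 0 < u 0 → ∀ s : S,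
    IsLUB (Set.range fun n => smul (u n) s) (smul (⨆ n, u n) s)
  sup_right : ∀ {a : ℝ≥0∞}, 0 < a → ∀ u : ℕ → S, Monotone u → ∀ x : S,
    IsLUB (Set.range u) x → IsLUB (Set.range fun n => smul a (u n)) (smul a x)
  one_smul : ∀ s : S, smul 1 s = s

/-- `D` is a dense subset of `S`: every element of `S` is the supremum of a rapidly
increasing sequence of elements of `D`. -/
def IsDenseSub {S : Type*} [AddCommMonoid S] [PartialOrder S] (D : Set S) : Prop :=
  ∀ s : S, ∃ u : ℕ → S, (∀ n, u n ∈ D) ∧ (∀ n, CC (u n) (u (n + 1))) ∧ IsLUB (Set.range u) s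

/-- `m` is the least upper bound of the functionals `l₁` and `l₂` in `F(S)`
(pointwise order). -/
def IsFSup {S : Type*} [AddCommMonoid S] [PartialOrder S] (l₁ l₂ m : S → ℝ≥0∞) : Prop :=
  IsFunctional m ∧ (∀ s, l₁ s ≤ m s) ∧ (∀ s, l₂ s ≤ m s) ∧
    ∀ d : S → ℝ≥0∞, IsFunctional d → (∀ s, l₁ s ≤ d s) → (∀ s, l₂ s ≤ d s) → ∀ s, m s ≤ d s

/-- `m` is the greatest lower bound of the functionals `l₁` and `l₂` in `F(S)`
(pointwise order). -/
def IsFInf {S : Type*} [AddCommMonoid S] [PartialOrder S] (l₁ l₂ m : S → ℝ≥0∞) : Prop :=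
  IsFunctional m ∧ (∀ s, m s ≤ l₁ s) ∧ (∀ s, m s ≤ l₂ s) ∧
    ∀ d : S → ℝ≥0∞, IsFunctional d → (∀ s, d s ≤ l₁ s) → (∀ s, d s ≤ l₂ s) → ∀ s, d s ≤ m s

/-- An isomorphism of ordered semigroups between `S` and the extended natural numbers. -/
def IsOrdSemigroupIso {S : Type*} [AddCommMonoid S] [PartialOrder S] (e : S ≃ ℕ∞) : Prop :=
  (∀ a b : S, e (a + b) = e a + e b) ∧ e 0 = 0 ∧ ∀ a b : S, a ≤ b ↔ e a ≤ e b

/-!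
The join of two functionals is `(λ ∨ μ) s = ⨆ {λ x + μ y | x + y ≤ s}`, and the only delicate point
is that it is subadditive. This amounts to the following: if `λ ≤ μ + a` below `s` and `λ ≤ μ + b`
below `t`, then `λ ≤ μ + (a + b)` below `s + t`. As in the Hahn decomposition theorem, choose
`x ≤ s + t` at which the signed functional `λ - μ` is almost maximal; then `λ - μ` is almost
nonnegative below `x`. Axiom O6 covers `x` by some `r ≤ s, x` and `w ≤ t, x`. Almost nonnegativity
below `r` and below `w` passes to `r + w`: O6 gives `μ ≤ 2 λ` there at once, and cutting off the
pieces where already `μ ≤ λ` halves the excess of the constant over `1` repeatedly. Hence the part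
of `r + w` in excess of `x` contributes almost nonnegatively, and `λ - μ` at `x` is almost bounded
by its value at `r + w`, that is by `a + b`.

Arbitrary suprema are then pointwise suprema over the directed family of finite joins, and infima
are suprema of sets of lower bounds.
-/

section Functionals

/-- Positively ordered commutative monoids satisfying the axioms O2, O3, O5 and O6, where `≪` refers
to those increasing sequences that happen to have a supremum. The axioms of an ordered monoid are
expressed by the Mathlib classes. -/
class PreCuO6 (S : Type*) [AddCommMonoid S] [PartialOrder S] : Prop extends
    IsOrderedAddMonoid S, IsBotZeroClass S where
  exists_seq_cc (s : S) : ∃ u : ℕ → S, (∀ n, CC (u n) (u (n + 1))) ∧ IsLUB (Set.range u) s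
  add_cc_add {s₁ t₁ s₂ t₂ : S} : CC s₁ t₁ → CC s₂ t₂ → CC (s₁ + s₂) (t₁ + t₂)
  exists_complement {s' s t : S} : CC s' s → s ≤ t → ∃ r, s' + r ≤ t ∧ t ≤ s + r
  exists_split {s r t s' : S} : s ≤ r + t → CC s' s →
    ∃ r' t', s' ≤ r' + t' ∧ r' ≤ r ∧ r' ≤ s ∧ t' ≤ t ∧ t' ≤ s

variable {S : Type*} [AddCommMonoid S] [PartialOrder S]

lemma CuO6.preCuO6 (hS : CuO6 S) : PreCuO6 S where
  add_le_add_left _ _ h := hS.addRightMono h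
  isBot_zero := hS.zeroLe
  exists_seq_cc := hS.O2
  add_cc_add := hS.O3
  exists_complement := hS.O5
  exists_split h h' := hS.O6 h h'

lemma CC.le {s t : S} (h : CC s t) : s ≤ t := by
  obtain ⟨_, hst⟩ := h (fun _ => t) monotone_const t (by simp) le_rfl
  exact hst

lemma CC.trans_le {r s t : S} (h : CC r s) (hst : s ≤ t) : CC r t :=
  fun u hu x hx htx => h u hu x hx (hst.trans htx)

variable {l₁ l₂ : S → ℝ≥0∞} {a b k δ ε : ℝ≥0∞} {r s t x : S}

namespace IsFunctional

lemma const_mul (h : IsFunctional l₁) (k : ℝ≥0∞) : IsFunctional (fun s => k * l₁ s) where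
  map_zero := by simp [h.map_zero]
  map_add s t := by rw [h.map_add, mul_add]
  mono hst := mul_le_mul_right (h.mono hst) k
  map_sup u hu x hx := by rw [h.map_sup u hu x hx, ENNReal.mul_iSup]

lemma iSup_of_directed {ι : Type*} {f : ι → S → ℝ≥0∞}
    (hf : ∀ i, IsFunctional (f i)) (hdir : Directed (· ≤ ·) f) :
    IsFunctional fun s => ⨆ i, f i s where
  map_zero := by simp [(hf _).map_zero]
  map_add s t := by
    simp only [(hf _).map_add]
    refine (ENNReal.iSup_add_iSup fun i j => ?_).symm
    obtain ⟨k, hik, hjk⟩ := hdir i j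
    exact ⟨k, add_le_add (hik s) (hjk t)⟩
  mono h := iSup_mono fun i => (hf i).mono h
  map_sup u hu x hx := by
    rw [iSup_comm]
    exact iSup_congr fun i => (hf i).map_sup u hu x hx

lemma exists_isLUB_of_directedOn {A : Set {l : S → ℝ≥0∞ // IsFunctional l}}
    (hA : DirectedOn (· ≤ ·) A) : ∃ m, IsLUB A m :=
  ⟨⟨fun s => ⨆ l : A, l.1.1 s, iSup_of_directed (fun l => l.1.2) hA.directed_val⟩,
    fun l hl s => le_iSup (fun l : A => l.1.1 s) ⟨l, hl⟩,
    fun _ hd s => iSup_le fun l => hd l.2 s⟩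

lemma add_le_of_forall_cc [PreCuO6 S] (h : IsFunctional l₁)
    (hx : ∀ x', CC x' x → a + l₁ x' ≤ b) : a + l₁ x ≤ b := by
  obtain ⟨u, hu, hux⟩ := PreCuO6.exists_seq_cc x
  rw [h.map_sup u (monotone_nat_of_le_succ fun n => (hu n).le) x hux, ENNReal.add_iSup]
  exact iSup_le fun n => hx _ ((hu n).trans_le (hux.1 ⟨n + 1, rfl⟩))

lemma le_of_forall_cc [PreCuO6 S] (h : IsFunctional l₁)
    (hx : ∀ x', CC x' x → l₁ x' ≤ b) : l₁ x ≤ b := by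
  simpa using h.add_le_of_forall_cc (a := 0) (by simpa using hx)

end IsFunctional

/-- `LeBelow l₁ l₂ a s` says that the signed functional `l₁ - l₂` is at most `a` below `s`. The
subtraction is avoided because `l₁` and `l₂` may both be infinite. -/
def LeBelow {S : Type*} [Preorder S] (l₁ l₂ : S → ℝ≥0∞) (a : ℝ≥0∞) (s : S) : Prop :=
  ∀ x ≤ s, l₁ x ≤ l₂ x + a

namespace LeBelow

lemma anti {S : Type*} [Preorder S] {l₁ l₂ : S → ℝ≥0∞} {s t : S} (h : LeBelow l₁ l₂ a t)
    (hst : s ≤ t) : LeBelow l₁ l₂ a s :=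
  fun x hx => h x (hx.trans hst)

lemma exists_almost_attained [IsBotZeroClass S] (h₁ : IsFunctional l₁) (h₂ : IsFunctional l₂)
    (hs : l₁ s ≠ ∞) :
    ∃ M ≠ ∞, LeBelow l₁ l₂ M s ∧ ∀ ε ≠ 0, ∃ x ≤ s, M + l₂ x ≤ l₁ x + ε := by
  let M : ℝ≥0∞ := ⨆ x : Set.Iic s, (l₁ x - l₂ x)
  have hM : M ≠ ∞ := ne_top_of_le_ne_top hs <| iSup_le fun x => tsub_le_self.trans (h₁.mono x.2)
  have hbound : LeBelow l₁ l₂ M s := fun x hx =>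
    tsub_le_iff_left.1 (le_iSup (fun y : Set.Iic s => l₁ y - l₂ y) ⟨x, hx⟩)
  refine ⟨M, hM, hbound, fun ε hε => ?_⟩
  obtain hM0 | hM0 := eq_or_ne M 0
  · exact ⟨0, zero_le, by simp [hM0, h₂.map_zero]⟩
  · obtain ⟨⟨x, hx⟩, hMx⟩ := lt_iSup_iff.1 (ENNReal.sub_lt_self hM hM0 hε)
    refine ⟨x, hx, ?_⟩
    calc M + l₂ x ≤ M - ε + l₂ x + ε := by
          rw [add_right_comm]; gcongr; exact le_tsub_add
      _ ≤ l₁ x + ε := by gcongr; exact (lt_tsub_iff_right.1 hMx).le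

variable [PreCuO6 S]

/-- The bound `l₁ - l₂ ≤ a` extends to the formal difference `x - r`, which by O5 is approximated by
elements below `x`. -/
lemma add_le_add_add_of_le (h₁ : IsFunctional l₁) (h₂ : IsFunctional l₂) (h : LeBelow l₁ l₂ a x)
    (hr : r ≤ x) : l₁ x + l₂ r ≤ l₂ x + l₁ r + a := by
  refine h₂.add_le_of_forall_cc fun r' hr' => ?_
  obtain ⟨z, hz, hz'⟩ := PreCuO6.exists_complement hr' hr
  calc l₁ x + l₂ r' ≤ l₁ r + l₁ z + l₂ r' := by grw [h₁.mono hz', h₁.map_add]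
    _ ≤ l₁ r + (l₂ z + a) + l₂ r' := by grw [h z ((le_add_of_nonneg_left zero_le).trans hz)]
    _ = l₂ (r' + z) + l₁ r + a := by rw [h₂.map_add]; ring
    _ ≤ l₂ x + l₁ r + a := by grw [h₂.mono hz]

lemma swap_of_almost_attained (h₁ : IsFunctional l₁) (h₂ : IsFunctional l₂) (ha : a ≠ ∞)
    (hx₂ : l₂ x ≠ ∞) (h : LeBelow l₁ l₂ a x) (hx : a + l₂ x ≤ l₁ x + ε) :
    LeBelow l₂ l₁ ε x := by
  intro y hy
  refine ENNReal.le_of_add_le_add_left (ENNReal.add_ne_top.2 ⟨ha, hx₂⟩) ?_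
  calc a + l₂ x + l₂ y ≤ l₁ x + l₂ y + ε := by grw [hx, add_right_comm]
    _ ≤ l₂ x + l₁ y + a + ε := by grw [h.add_le_add_add_of_le h₁ h₂ hy]
    _ = a + l₂ x + (l₁ y + ε) := by ring

lemma two_mul_of_add (h₁ : IsFunctional l₁) (h₂ : IsFunctional l₂)
    (hs : LeBelow l₁ l₂ ε s) (ht : LeBelow l₁ l₂ ε t) :
    LeBelow l₁ (fun x => 2 * l₂ x) (2 * ε) (s + t) := by
  intro c hc
  refine h₁.le_of_forall_cc fun c' hc' => ?_
  obtain ⟨r, w, hc'rw, hrs, hrc, hwt, hwc⟩ := PreCuO6.exists_split hc hc'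
  calc l₁ c' ≤ l₁ r + l₁ w := (h₁.mono hc'rw).trans_eq (h₁.map_add r w)
    _ ≤ l₂ r + ε + (l₂ w + ε) := add_le_add (hs r hrs) (ht w hwt)
    _ ≤ l₂ c + ε + (l₂ c + ε) := by grw [h₂.mono hrc, h₂.mono hwc]
    _ = 2 * l₂ c + 2 * ε := by ring

/-- By O6, below `s` or below `t` one finds a part `p` of `c ≤ s + t` that carries about half of
`l₂ c`. The excess `2 * k` of the coefficient is only needed on the remainder `c - p`. -/
lemma halve_coeff (h₁ : IsFunctional l₁) (h₂ : IsFunctional l₂) (hk : k ≠ ∞)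
    (hs : LeBelow l₁ l₂ ε s) (ht : LeBelow l₁ l₂ ε t)
    (h : LeBelow l₁ (fun x => (1 + 2 * k) * l₂ x) δ (s + t)) :
    LeBelow l₁ (fun x => (1 + k) * l₂ x) (ε + δ) (s + t) := by
  intro c hc
  obtain hc₂ | hc₂ := eq_or_ne (l₂ c) ∞
  · simp [hc₂]
  suffices l₁ c + k * l₂ c ≤ (1 + 2 * k) * l₂ c + (ε + δ) by
    refine ENNReal.le_of_add_le_add_right (ENNReal.mul_ne_top hk hc₂) (this.trans_eq ?_)
    ring
  refine (h₂.const_mul k).add_le_of_forall_cc fun c' hc' => ?_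
  obtain ⟨p, hpc, hp, hc'p⟩ : ∃ p ≤ c, l₁ p ≤ l₂ p + ε ∧ l₂ c' ≤ 2 * l₂ p := by
    obtain ⟨r, w, hc'rw, hrs, hrc, hwt, hwc⟩ := PreCuO6.exists_split hc hc'
    have hc'₂ : l₂ c' ≤ l₂ r + l₂ w := (h₂.mono hc'rw).trans_eq (h₂.map_add r w)
    obtain hrw | hwr := le_total (l₂ r) (l₂ w)
    · exact ⟨w, hwc, ht w hwt, by grw [hc'₂, hrw, two_mul]⟩
    · exact ⟨r, hrc, hs r hrs, by grw [hc'₂, hwr, two_mul]⟩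
  refine ENNReal.le_of_add_le_add_right (ne_top_of_le_ne_top hc₂ (h₂.mono hpc)) ?_
  calc l₁ c + k * l₂ c' + l₂ p ≤ l₁ c + k * (2 * l₂ p) + l₂ p := by grw [hc'p]
    _ = l₁ c + (1 + 2 * k) * l₂ p := by ring
    _ ≤ (1 + 2 * k) * l₂ c + l₁ p + δ :=
        (h.anti hc).add_le_add_add_of_le h₁ (h₂.const_mul _) hpc
    _ ≤ (1 + 2 * k) * l₂ c + (l₂ p + ε) + δ := by grw [hp]
    _ = (1 + 2 * k) * l₂ c + (ε + δ) + l₂ p := by ring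

lemma one_add_pow_mul_of_add (h₁ : IsFunctional l₁) (h₂ : IsFunctional l₂)
    (hs : LeBelow l₁ l₂ ε s) (ht : LeBelow l₁ l₂ ε t) (n : ℕ) :
    LeBelow l₁ (fun x => (1 + 2⁻¹ ^ n) * l₂ x) ((n + 2) * ε) (s + t) := by
  induction n with
  | zero => simpa [one_add_one_eq_two] using two_mul_of_add h₁ h₂ hs ht
  | succ n ih =>
    have hpow : (2 : ℝ≥0∞) * 2⁻¹ ^ (n + 1) = 2⁻¹ ^ n := by
      rw [pow_succ', ← mul_assoc, ENNReal.mul_inv_cancel two_ne_zero ENNReal.ofNat_ne_top, one_mul]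
    rw [← hpow] at ih
    convert halve_coeff h₁ h₂ (by finiteness) hs ht ih using 1
    push_cast
    ring

lemma le_add_of_swap (h₁ : IsFunctional l₁) (h₂ : IsFunctional l₂)
    (hst₂ : l₂ (s + t) ≠ ∞) (hs : LeBelow l₁ l₂ a s) (ht : LeBelow l₁ l₂ b t) (hx : x ≤ s + t)
    (hpos : LeBelow l₂ l₁ ε x) (n : ℕ) :
    l₁ x ≤ l₂ x + (a + b + (2⁻¹ ^ n * l₁ (s + t) + (n + 2) * ε)) := by
  refine h₁.le_of_forall_cc fun x' hx' => ?_
  obtain ⟨r, w, hx'rw, hrs, hrx, hwt, hwx⟩ := PreCuO6.exists_split hx hx'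
  have hrw : r + w ≤ s + t := add_le_add hrs hwt
  set η : ℝ≥0∞ := 2⁻¹ ^ n * l₁ (s + t) + (n + 2) * ε
  have hexcess : LeBelow l₂ l₁ η (r + w) := by
    intro v hv
    have hv₁ : l₁ v ≤ l₁ (s + t) := h₁.mono (hv.trans hrw)
    calc l₂ v ≤ (1 + 2⁻¹ ^ n) * l₁ v + (n + 2) * ε :=
          one_add_pow_mul_of_add h₂ h₁ (hpos.anti hrx) (hpos.anti hwx) n v hv
      _ = l₁ v + (2⁻¹ ^ n * l₁ v + (n + 2) * ε) := by ring
      _ ≤ l₁ v + η := by dsimp only [η]; gcongr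
  refine ENNReal.le_of_add_le_add_left (ne_top_of_le_ne_top hst₂ (h₂.mono hrw)) ?_
  calc l₂ (r + w) + l₁ x' ≤ l₁ (r + w) + l₂ x' + η := hexcess.add_le_add_add_of_le h₂ h₁ hx'rw
    _ ≤ l₂ r + a + (l₂ w + b) + l₂ x + η := by
      grw [h₁.map_add, hs r hrs, ht w hwt, h₂.mono hx'.le]
    _ = l₂ (r + w) + (l₂ x + (a + b + η)) := by rw [h₂.map_add]; ring

lemma add (h₁ : IsFunctional l₁) (h₂ : IsFunctional l₂) (hst₁ : l₁ (s + t) ≠ ∞)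
    (hst₂ : l₂ (s + t) ≠ ∞) (hs : LeBelow l₁ l₂ a s) (ht : LeBelow l₁ l₂ b t) :
    LeBelow l₁ l₂ (a + b) (s + t) := by
  obtain ⟨M, hM, hbound, hattained⟩ := exists_almost_attained h₁ h₂ hst₁
  suffices M ≤ a + b from fun x hx => by grw [hbound x hx, this]
  have hMn (n : ℕ) : M ≤ a + b + 2⁻¹ ^ n * (l₁ (s + t) + 1) := by
    set ε : ℝ≥0∞ := 2⁻¹ ^ n / (n + 3)
    have hε : ε ≠ 0 := by simp [ε, ENNReal.div_eq_zero_iff]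
    have hnε : (n + 3) * ε = 2⁻¹ ^ n := ENNReal.mul_div_cancel (by simp) (by finiteness)
    obtain ⟨x, hx, hMx⟩ := hattained ε hε
    have hx₂ : l₂ x ≠ ∞ := ne_top_of_le_ne_top hst₂ (h₂.mono hx)
    have hpos := (hbound.anti hx).swap_of_almost_attained h₁ h₂ hM hx₂ hMx
    refine ENNReal.le_of_add_le_add_right hx₂ ?_
    calc M + l₂ x ≤ l₁ x + ε := hMx
      _ ≤ l₂ x + (a + b + (2⁻¹ ^ n * l₁ (s + t) + (n + 2) * ε)) + ε := by
        grw [le_add_of_swap h₁ h₂ hst₂ hs ht hx hpos n]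
      _ = a + b + (2⁻¹ ^ n * l₁ (s + t) + (n + 3) * ε) + l₂ x := by ring
      _ = a + b + 2⁻¹ ^ n * (l₁ (s + t) + 1) + l₂ x := by rw [hnε]; ring
  have hpow : Filter.Tendsto (fun n : ℕ => (2⁻¹ : ℝ≥0∞) ^ n) Filter.atTop (nhds 0) :=
    ENNReal.tendsto_pow_atTop_nhds_zero_of_lt_one (by simp)
  have hlim := (ENNReal.Tendsto.mul_const hpow
    (b := l₁ (s + t) + 1) (.inr (by finiteness))).const_add (a + b)
  rw [zero_mul, add_zero] at hlim
  exact ge_of_tendsto' hlim hMn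

end LeBelow

/-- The join `l₁ ∨ l₂` of two functionals, as a supremum over all decompositions `x + y ≤ s`. The
inequality accounts for the lack of exact complements in `S`. -/
noncomputable def functionalSup (l₁ l₂ : S → ℝ≥0∞) (s : S) : ℝ≥0∞ :=
  ⨆ p : {p : S × S // p.1 + p.2 ≤ s}, l₁ p.1.1 + l₂ p.1.2

lemma le_functionalSup {x y s : S} (h : x + y ≤ s) : l₁ x + l₂ y ≤ functionalSup l₁ l₂ s :=
  le_iSup (fun p : {p : S × S // p.1 + p.2 ≤ s} => l₁ p.1.1 + l₂ p.1.2) ⟨(x, y), h⟩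

lemma functionalSup_le_iff : functionalSup l₁ l₂ s ≤ a ↔ ∀ x y, x + y ≤ s → l₁ x + l₂ y ≤ a := by
  simp [functionalSup, iSup_le_iff]

lemma functionalSup_mono (h : s ≤ t) : functionalSup l₁ l₂ s ≤ functionalSup l₁ l₂ t :=
  functionalSup_le_iff.2 fun _ _ hxy => le_functionalSup (hxy.trans h)

lemma le_functionalSup_left (h₂ : IsFunctional l₂) (s : S) : l₁ s ≤ functionalSup l₁ l₂ s := by
  simpa [h₂.map_zero] using le_functionalSup (l₁ := l₁) (l₂ := l₂) (add_zero s).le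

lemma le_functionalSup_right (h₁ : IsFunctional l₁) (s : S) : l₂ s ≤ functionalSup l₁ l₂ s := by
  simpa [h₁.map_zero] using le_functionalSup (l₁ := l₁) (l₂ := l₂) (zero_add s).le

lemma functionalSup_le {d : S → ℝ≥0∞} (hd : IsFunctional d) (h₁ : l₁ ≤ d) (h₂ : l₂ ≤ d) :
    functionalSup l₁ l₂ ≤ d := fun s => functionalSup_le_iff.2 fun x y hxy =>
  calc l₁ x + l₂ y ≤ d x + d y := add_le_add (h₁ x) (h₂ y)
    _ = d (x + y) := (hd.map_add x y).symm
    _ ≤ d s := hd.mono hxy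

lemma functionalSup_zero [IsOrderedAddMonoid S] [IsBotZeroClass S] (h₁ : IsFunctional l₁)
    (h₂ : IsFunctional l₂) : functionalSup l₁ l₂ 0 = 0 := by
  refine le_antisymm (functionalSup_le_iff.2 fun x y hxy => ?_) zero_le
  have hx : x ≤ 0 := (le_add_of_nonneg_right zero_le).trans hxy
  have hy : y ≤ 0 := (le_add_of_nonneg_left zero_le).trans hxy
  grw [h₁.mono hx, h₂.mono hy, h₁.map_zero, h₂.map_zero, add_zero]

lemma functionalSup_add_le_functionalSup_add [IsOrderedAddMonoid S] (h₁ : IsFunctional l₁)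
    (h₂ : IsFunctional l₂) (s t : S) :
    functionalSup l₁ l₂ s + functionalSup l₁ l₂ t ≤ functionalSup l₁ l₂ (s + t) := by
  have (r : S) : Nonempty {p : S × S // p.1 + p.2 ≤ r} := ⟨⟨(r, 0), (add_zero r).le⟩⟩
  refine ENNReal.iSup_add_iSup_le ?_
  rintro ⟨⟨x, y⟩, hxy⟩ ⟨⟨x', y'⟩, hxy'⟩
  calc l₁ x + l₂ y + (l₁ x' + l₂ y') = l₁ (x + x') + l₂ (y + y') := by
        rw [h₁.map_add, h₂.map_add, add_add_add_comm]
    _ ≤ functionalSup l₁ l₂ (s + t) :=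
        le_functionalSup ((add_add_add_comm x x' y y').trans_le (add_le_add hxy hxy'))

variable [PreCuO6 S]

lemma add_le_add_functionalSup (h₁ : IsFunctional l₁) (h₂ : IsFunctional l₂) (hr : r ≤ s) :
    l₂ s + l₁ r ≤ l₂ r + functionalSup l₁ l₂ s := by
  refine h₁.add_le_of_forall_cc fun r' hr' => ?_
  obtain ⟨z, hz, hz'⟩ := PreCuO6.exists_complement hr' hr
  calc l₂ s + l₁ r' ≤ l₂ r + l₂ z + l₁ r' := by grw [h₂.mono hz', h₂.map_add]
    _ = l₂ r + (l₁ r' + l₂ z) := by ring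
    _ ≤ l₂ r + functionalSup l₁ l₂ s := by grw [le_functionalSup hz]

lemma leBelow_functionalSup_sub (h₁ : IsFunctional l₁) (h₂ : IsFunctional l₂) (hs : l₂ s ≠ ∞) :
    LeBelow l₁ l₂ (functionalSup l₁ l₂ s - l₂ s) s := by
  intro r hr
  refine ENNReal.le_of_add_le_add_left hs ?_
  rw [add_left_comm, add_tsub_cancel_of_le (le_functionalSup_right h₁ s)]
  exact add_le_add_functionalSup h₁ h₂ hr

lemma functionalSup_add_le (h₁ : IsFunctional l₁) (h₂ : IsFunctional l₂) (s t : S) :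
    functionalSup l₁ l₂ (s + t) ≤ functionalSup l₁ l₂ s + functionalSup l₁ l₂ t := by
  set m := functionalSup l₁ l₂
  obtain hst | hst := eq_or_ne (m s + m t) ∞
  · simp [hst]
  have hst₁ : l₁ (s + t) ≠ ∞ := ne_top_of_le_ne_top hst <| by
    rw [h₁.map_add]
    exact add_le_add (le_functionalSup_left h₂ s) (le_functionalSup_left h₂ t)
  have hst₂ : l₂ (s + t) ≠ ∞ := ne_top_of_le_ne_top hst <| by
    rw [h₂.map_add]
    exact add_le_add (le_functionalSup_right h₁ s) (le_functionalSup_right h₁ t)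
  obtain ⟨hs₂, ht₂⟩ := ENNReal.add_ne_top.1 (h₂.map_add s t ▸ hst₂)
  refine functionalSup_le_iff.2 fun x y hxy => ?_
  have hx : x ≤ s + t := (le_add_of_nonneg_right zero_le).trans hxy
  have hdiff : l₁ x ≤ l₂ x + ((m s - l₂ s) + (m t - l₂ t)) :=
    LeBelow.add h₁ h₂ hst₁ hst₂ (leBelow_functionalSup_sub h₁ h₂ hs₂)
      (leBelow_functionalSup_sub h₁ h₂ ht₂) x hx
  calc l₁ x + l₂ y ≤ l₂ x + ((m s - l₂ s) + (m t - l₂ t)) + l₂ y := by grw [hdiff]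
    _ = (m s - l₂ s) + (m t - l₂ t) + l₂ (x + y) := by rw [h₂.map_add]; ring
    _ ≤ (m s - l₂ s) + (m t - l₂ t) + (l₂ s + l₂ t) := by grw [h₂.mono hxy, h₂.map_add]
    _ = m s + m t := by
      rw [add_add_add_comm, tsub_add_cancel_of_le (le_functionalSup_right h₁ s),
        tsub_add_cancel_of_le (le_functionalSup_right h₁ t)]

lemma functionalSup_eq_iSup_of_isLUB (h₁ : IsFunctional l₁) (h₂ : IsFunctional l₂) {u : ℕ → S}
    (hu : Monotone u) (hx : IsLUB (Set.range u) x) :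
    functionalSup l₁ l₂ x = ⨆ n, functionalSup l₁ l₂ (u n) := by
  refine le_antisymm (functionalSup_le_iff.2 fun y z hyz => ?_)
    (iSup_le fun n => functionalSup_mono (hx.1 ⟨n, rfl⟩))
  refine h₂.add_le_of_forall_cc fun z' hz' => ?_
  rw [add_comm]
  refine h₁.add_le_of_forall_cc fun y' hy' => ?_
  obtain ⟨n, hn⟩ := PreCuO6.add_cc_add hy' hz' u hu x hx hyz
  rw [add_comm]
  exact le_iSup_of_le n (le_functionalSup hn)

lemma IsFunctional.functionalSup (h₁ : IsFunctional l₁) (h₂ : IsFunctional l₂) :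
    IsFunctional (functionalSup l₁ l₂) where
  map_zero := functionalSup_zero h₁ h₂
  map_add s t := (functionalSup_add_le h₁ h₂ s t).antisymm
    (functionalSup_add_le_functionalSup_add h₁ h₂ s t)
  mono := functionalSup_mono
  map_sup _ hu _ hx := functionalSup_eq_iSup_of_isLUB h₁ h₂ hu hx

namespace IsFunctional

noncomputable instance : SemilatticeSup {l : S → ℝ≥0∞ // IsFunctional l} where
  sup l m := ⟨_, l.2.functionalSup m.2⟩
  le_sup_left _ m := le_functionalSup_left m.2
  le_sup_right l _ := le_functionalSup_right l.2
  sup_le _ _ d hl hm := functionalSup_le d.2 hl hm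

lemma exists_isLUB (A : Set {l : S → ℝ≥0∞ // IsFunctional l}) : ∃ m, IsLUB A m := by
  obtain ⟨m, hm⟩ := exists_isLUB_of_directedOn (supClosed_supClosure (s := A)).directedOn
  exact ⟨m, isLUB_supClosure.1 hm⟩

end IsFunctional

end Functionals

theorem functionals_completeLattice_general {S : Type*} [AddCommMonoid S] [PartialOrder S]
    [PreCuO6 S] (A : Set {l : S → ℝ≥0∞ // IsFunctional l}) :
    (∃ msup : {l : S → ℝ≥0∞ // IsFunctional l}, IsLUB A msup) ∧
    (∃ minf : {l : S → ℝ≥0∞ // IsFunctional l}, IsGLB A minf) := by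
  obtain ⟨msup, hmsup⟩ := IsFunctional.exists_isLUB A
  obtain ⟨minf, hminf⟩ := IsFunctional.exists_isLUB (lowerBounds A)
  exact ⟨⟨msup, hmsup⟩, ⟨minf, isLUB_lowerBounds.1 hminf⟩⟩

/-- F(S) is a complete lattice: every subset has a least upper bound
and a greatest lower bound in F(S). -/
theorem functionals_completeLattice {S : Type*} [AddCommMonoid S] [PartialOrder S]
    (hS : CuO6 S) (A : Set {l : S → ℝ≥0∞ // IsFunctional l}) :
    (∃ msup : {l : S → ℝ≥0∞ // IsFunctional l}, IsLUB A msup) ∧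
    (∃ minf : {l : S → ℝ≥0∞ // IsFunctional l}, IsGLB A minf) := by
  have := hS.preCuO6
  exact functionals_completeLattice_general A
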